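/- Let v: [0,s]_ℤ → ℝ₊ be M♮-concave, and for a price p let D(p) := argmax_{x ∈ [0,s]_ℤ} (v(x) − Σ_j q_j(p_j) x_j) with minimal elements Ď(p), where each q_j: ℝ₊ → ℝ₊ is continuous and strictly increasing. Let p ≤ p'. Then for any x ∈ Ď(p) there exists x' ∈ Ď(p') such that x_j ≤ x'_j for all j with p_j = p'_j, and x(M) ≥ x'(M). -/

import Mathlib

open Finset

lemma aux_sum_add {M : Type*} [Fintype M] [DecidableEq M] (y : M → ℤ) (j : M) :
    ∑ i, (y + Pi.single j 1 : M → ℤ) i = ∑ i, y i + 1 := by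
  simp [Finset.sum_add_distrib]

lemma aux_sum_sub {M : Type*} [Fintype M] [DecidableEq M] (y : M → ℤ) (j : M) :
    ∑ i, (y - Pi.single j 1 : M → ℤ) i = ∑ i, y i - 1 := by
  simp [Finset.sum_sub_distrib]

lemma aux_lin_add {M : Type*} [Fintype M] [DecidableEq M] (c : M → ℝ) (y : M → ℤ) (j : M) :
    ∑ i, c i * (((y + Pi.single j 1 : M → ℤ) i : ℤ) : ℝ) = ∑ i, c i * (y i : ℝ) + c j := by
  simp [mul_add, Finset.sum_add_distrib, Pi.single_apply]

lemma aux_lin_sub {M : Type*} [Fintype M] [DecidableEq M] (c : M → ℝ) (y : M → ℤ) (j : M) :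
    ∑ i, c i * (((y - Pi.single j 1 : M → ℤ) i : ℤ) : ℝ) = ∑ i, c i * (y i : ℝ) - c j := by
  simp [mul_sub, Finset.sum_sub_distrib, Pi.single_apply]

/-- Moving `y` one step towards `x` decreases the one-sided distance. -/
lemma aux_dist {M : Type*} [Fintype M] [DecidableEq M] (x y : M → ℤ) (j k : M)
    (hj : x j < y j) (hk : y k < x k) :
    ∑ i, ((y - Pi.single j 1 + Pi.single k 1 : M → ℤ) i - x i).toNat < ∑ i, (y i - x i).toNat := by
  apply Finset.sum_lt_sum
  · intro i _
    simp only [Pi.add_apply, Pi.sub_apply, Pi.single_apply]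
    split_ifs <;> subst_vars <;> omega
  · refine ⟨j, Finset.mem_univ _, ?_⟩
    simp only [Pi.add_apply, Pi.sub_apply, Pi.single_apply]
    split_ifs <;> subst_vars <;> omega

/-- The Murota–Shioura exchange property for points of different total. -/
lemma aux_MS {M : Type*} [Fintype M] [DecidableEq M]
    (s : M → ℤ) (v : (M → ℤ) → ℝ)
    (box : Set (M → ℤ)) (hbox : box = {x | ∀ j, 0 ≤ x j ∧ x j ≤ s j})
    (hMconc : ∀ x ∈ box, ∀ x' ∈ box, ∀ j, x' j < x j →
      (v x + v x' ≤ v (x - Pi.single j 1) + v (x' + Pi.single j 1)) ∨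
      (∃ k, x k < x' k ∧
        v x + v x' ≤ v (x - Pi.single j 1 + Pi.single k 1)
                    + v (x' + Pi.single j 1 - Pi.single k 1)))
    (n : ℕ) : ∀ x ∈ box, ∀ y ∈ box, ∑ i, (y i - x i).toNat ≤ n → ∑ i, x i < ∑ i, y i →
      ∃ k, x k < y k ∧ v x + v y ≤ v (x + Pi.single k 1) + v (y - Pi.single k 1) := by
  induction n with
  | zero =>
    intro x _ y _ h hlt
    exfalso
    have h0 : ∑ i, (y i - x i).toNat = 0 := by omega
    rw [Finset.sum_eq_zero_iff] at h0
    have : ∑ i, y i ≤ ∑ i, x i := Finset.sum_le_sum fun i hi => by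
      have := h0 i hi
      omega
    omega
  | succ n ih =>
    intro x hx y hy h hlt
    by_contra! hcon
    obtain ⟨j0, -, hj0⟩ := Finset.exists_lt_of_sum_lt hlt
    by_cases hS : ∃ k, y k < x k
    · obtain ⟨k, hk⟩ := hS
      obtain ⟨j, hjS, hjmax⟩ := Finset.exists_max_image (Finset.univ.filter fun i => x i < y i)
        (fun i => v (y - Pi.single i 1 + Pi.single k 1) + v (x + Pi.single i 1))
        ⟨j0, by simpa using hj0⟩
      have hj : x j < y j := by simpa using hjS
      have hxb := hx
      have hyb := hy
      rw [hbox] at hxb hyb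
      have hjk : j ≠ k := by rintro rfl; omega
      have hy' : y - Pi.single j 1 + Pi.single k 1 ∈ box := by
        rw [hbox]
        intro i
        have h1 := hxb i
        have h2 := hyb i
        simp only [Pi.add_apply, Pi.sub_apply, Pi.single_apply]
        split_ifs <;> subst_vars <;> omega
      have hd := aux_dist x y j k hj hk
      obtain ⟨l, hl, hIH⟩ := ih x hx _ hy' (by omega) (by
        rw [aux_sum_add, aux_sum_sub]; omega)
      have hlk : l ≠ k := by
        rintro rfl
        simp [Pi.single_apply, hjk.symm] at hl
        omega
      have hl2 : x l < y l ∧ (l = j → x l + 1 < y l) := by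
        simp only [Pi.add_apply, Pi.sub_apply, Pi.single_apply, hlk, if_false] at hl
        split_ifs at hl <;> grind
      have hm := hjmax l (by simpa using hl2.1)
      have hcj := hcon j hj
      have hcl := hcon l hl2.1
      have hy'' : y - Pi.single j 1 + Pi.single k 1 - Pi.single l 1 ∈ box := by
        rw [hbox]
        intro i
        have h1 := hxb i
        have h2 := hyb i
        simp only [Pi.add_apply, Pi.sub_apply, Pi.single_apply]
        split_ifs <;> subst_vars <;> grind
      have hex := hMconc y hy _ hy'' j (by
        simp only [Pi.add_apply, Pi.sub_apply, Pi.single_apply]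
        split_ifs <;> grind)
      rcases hex with hA | ⟨k', hk', hB⟩
      · have e : y - Pi.single j 1 + Pi.single k 1 - Pi.single l 1 + Pi.single j 1
            = y - Pi.single l 1 + Pi.single k 1 := by abel
        rw [e] at hA
        linarith
      · have hkk : k' = k := by
          by_contra hne
          simp only [Pi.add_apply, Pi.sub_apply, Pi.single_apply, hne, if_false] at hk'
          split_ifs at hk' <;> omega
        subst hkk
        have e : y - Pi.single j 1 + Pi.single k' 1 - Pi.single l 1 + Pi.single j 1 - Pi.single k' 1
            = y - Pi.single l 1 := by abel
        rw [e] at hB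
        linarith
    · push Not at hS
      rcases hMconc y hy x hx j0 hj0 with hA | ⟨k, hk, -⟩
      · have := hcon j0 hj0
        linarith
      · have := hS k
        omega

/-- GS&LAD condition for minimal demand bundles: for `p ≤ p'` and any minimal
demanded bundle `x` at `p`, there is a minimal demanded bundle `x'` at `p'` with
`x_j ≤ x'_j` on goods with unchanged price and `x(M) ≥ x'(M)`. -/
theorem stmt4 {M : Type*} [Fintype M] [DecidableEq M]
    (s : M → ℤ) (hs : ∀ j, 0 ≤ s j)
    (v : (M → ℤ) → ℝ)
    (box : Set (M → ℤ)) (hbox : box = {x | ∀ j, 0 ≤ x j ∧ x j ≤ s j})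
    (hvnonneg : ∀ x ∈ box, 0 ≤ v x)
    -- M♮-concavity of `v` on the box
    (hMconc : ∀ x ∈ box, ∀ x' ∈ box, ∀ j, x' j < x j →
      (v x + v x' ≤ v (x - Pi.single j 1) + v (x' + Pi.single j 1)) ∨
      (∃ k, x k < x' k ∧
        v x + v x' ≤ v (x - Pi.single j 1 + Pi.single k 1)
                    + v (x' + Pi.single j 1 - Pi.single k 1)))
    (q : M → ℝ → ℝ)
    (hqmono : ∀ j, StrictMono (q j)) (hqcont : ∀ j, Continuous (q j))
    (hqnonneg : ∀ j r, 0 ≤ r → 0 ≤ q j r)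
    (p p' : M → ℝ) (hp : ∀ j, 0 ≤ p j) (hpp' : ∀ j, p j ≤ p' j)
    (D : (M → ℝ) → Set (M → ℤ))
    (hD : ∀ r, D r = {x ∈ box | ∀ y ∈ box,
        v y - ∑ j, q j (r j) * (y j : ℝ) ≤ v x - ∑ j, q j (r j) * (x j : ℝ)})
    (Dmin : (M → ℝ) → Set (M → ℤ))
    (hDmin : ∀ r, Dmin r = {x ∈ D r | ∀ y ∈ D r, y ≤ x → y = x})
    (x : M → ℤ) (hx : x ∈ Dmin p) :
    ∃ x' ∈ Dmin p', (∀ j, p j = p' j → x j ≤ x' j) ∧ ∑ j, x' j ≤ ∑ j, x j := by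

  have hfin : box.Finite := by
    have : box = Set.Icc 0 s := by
      rw [hbox]; ext z; simp [Set.mem_Icc, Pi.le_def, forall_and]
    rw [this]; exact Set.finite_Icc _ _
  have hne : box.Nonempty := ⟨0, by rw [hbox]; intro j; exact ⟨le_refl _, hs j⟩⟩
  have hDbox : ∀ r, D r ⊆ box := fun r z hz => by rw [hD] at hz; exact hz.1
  have hDmem : ∀ r z, z ∈ D r → ∀ w ∈ box,
      v w - ∑ j, q j (r j) * (w j : ℝ) ≤ v z - ∑ j, q j (r j) * (z j : ℝ) := by
    intro r z hz; rw [hD] at hz; exact hz.2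
  have hDup : ∀ r z, z ∈ D r → ∀ w ∈ box,
      v z - ∑ j, q j (r j) * (z j : ℝ) ≤ v w - ∑ j, q j (r j) * (w j : ℝ) → w ∈ D r := by
    intro r z hz w hw h
    rw [hD]
    exact ⟨hw, fun u hu => (hDmem r z hz u hu).trans h⟩
  have hsub : ∀ (z : M → ℤ) j, z - Pi.single j 1 ≤ z ∧ z - Pi.single j 1 ≠ z := by
    intro z j
    refine ⟨?_, fun h => ?_⟩
    · intro i
      simp only [Pi.sub_apply, Pi.single_apply]
      split_ifs <;> omega
    · have := congrFun h j
      simp at this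
  -- law of aggregate demand
  have hLAD : ∀ r r' : M → ℝ, (∀ j, r j ≤ r' j) → ∀ z ∈ D r, ∀ y ∈ Dmin r',
      ∑ j, y j ≤ ∑ j, z j := by
    intro r r' hr z hz y hy
    by_contra! hlt
    rw [hDmin] at hy
    obtain ⟨hyD, hymin⟩ := hy
    obtain ⟨k, hk, hv⟩ := aux_MS s v box hbox hMconc _ z (hDbox _ hz) y (hDbox _ hyD) le_rfl hlt
    have hzb := hDbox _ hz
    have hyb := hDbox _ hyD
    rw [hbox] at hzb hyb
    have h1 : z + Pi.single k 1 ∈ box := by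
      rw [hbox]; intro i
      have h1 := hzb i
      have h2 := hyb i
      simp only [Pi.add_apply, Pi.single_apply]
      split_ifs <;> subst_vars <;> omega
    have h2 : y - Pi.single k 1 ∈ box := by
      rw [hbox]; intro i
      have h1 := hzb i
      have h2 := hyb i
      simp only [Pi.sub_apply, Pi.single_apply]
      split_ifs <;> subst_vars <;> omega
    have h3 := hDmem _ _ hz _ h1
    rw [aux_lin_add (fun j => q j (r j))] at h3
    have hq := (hqmono k).monotone (hr k)
    have h4 := hDup _ _ hyD _ h2 (by
      rw [aux_lin_sub (fun j => q j (r' j))]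
      simp only at h3 ⊢
      linarith)
    exact (hsub y k).2 (hymin _ h4 (hsub y k).1)
  -- nonemptiness
  have hDminne : (Dmin p').Nonempty := by
    obtain ⟨z, hz, hzmax⟩ := Set.exists_max_image box
      (fun z => v z - ∑ j, q j (p' j) * (z j : ℝ)) hfin hne
    have hzD : z ∈ D p' := by rw [hD]; exact ⟨hz, hzmax⟩
    obtain ⟨y, hy⟩ := (hfin.subset (hDbox p')).exists_minimal ⟨z, hzD⟩
    refine ⟨y, ?_⟩
    rw [hDmin]
    exact ⟨hy.1, fun w hw hwy => le_antisymm hwy (hy.2 hw hwy)⟩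
  have hDminD : ∀ r, Dmin r ⊆ D r := fun r z hz => by rw [hDmin] at hz; exact hz.1
  obtain ⟨y, hy, hymin⟩ := Set.exists_min_image (Dmin p')
    (fun y => ∑ i, if p i = p' i then (x i - y i).toNat else 0)
    (hfin.subset ((hDminD p').trans (hDbox p'))) hDminne
  have hxD := hDminD _ hx
  have hyD := hDminD _ hy
  refine ⟨y, hy, ?_, hLAD p p' hpp' x hxD y hy⟩
  intro j hj
  by_contra! hlt
  have hxb := hDbox _ hxD
  have hyb := hDbox _ hyD
  rcases hMconc x hxb y hyb j hlt with hA | ⟨k, hk, hB⟩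
  · rw [hbox] at hxb hyb
    have h1 : x - Pi.single j 1 ∈ box := by
      rw [hbox]; intro i
      have h1 := hxb i
      have h2 := hyb i
      simp only [Pi.sub_apply, Pi.single_apply]
      split_ifs <;> subst_vars <;> omega
    have h2 : y + Pi.single j 1 ∈ box := by
      rw [hbox]; intro i
      have h1 := hxb i
      have h2 := hyb i
      simp only [Pi.add_apply, Pi.single_apply]
      split_ifs <;> subst_vars <;> omega
    have h3 := hDmem _ _ hyD _ h2
    rw [aux_lin_add (fun j => q j (p' j))] at h3
    have h4 := hDup _ _ hxD _ h1 (by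
      rw [aux_lin_sub (fun j => q j (p j))]
      simp only [hj] at h3 ⊢
      linarith)
    rw [hDmin] at hx
    exact (hsub x j).2 (hx.2 _ h4 (hsub x j).1)
  · rw [hbox] at hxb hyb
    have hjk : j ≠ k := by rintro rfl; omega
    have h1 : x - Pi.single j 1 + Pi.single k 1 ∈ box := by
      rw [hbox]; intro i
      have h1 := hxb i
      have h2 := hyb i
      simp only [Pi.add_apply, Pi.sub_apply, Pi.single_apply]
      split_ifs <;> subst_vars <;> omega
    have h2 : y + Pi.single j 1 - Pi.single k 1 ∈ box := by
      rw [hbox]; intro i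
      have h1 := hxb i
      have h2 := hyb i
      simp only [Pi.add_apply, Pi.sub_apply, Pi.single_apply]
      split_ifs <;> subst_vars <;> omega
    have h3 := hDmem _ _ hxD _ h1
    rw [aux_lin_add (fun j => q j (p j)), aux_lin_sub (fun j => q j (p j))] at h3
    have hq := (hqmono k).monotone (hpp' k)
    have h4 := hDup _ _ hyD _ h2 (by
      rw [aux_lin_sub (fun j => q j (p' j)), aux_lin_add (fun j => q j (p' j))]
      simp only [hj] at h3 ⊢
      linarith)
    have h5 : y + Pi.single j 1 - Pi.single k 1 ∈ Dmin p' := by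
      rw [hDmin]
      refine ⟨h4, fun w hw hwle => ?_⟩
      have hs1 := hLAD p' p' (fun _ => le_rfl) w hw y hy
      have hs2 : ∑ i, (y + Pi.single j 1 - Pi.single k 1 : M → ℤ) i = ∑ i, y i := by
        rw [aux_sum_sub, aux_sum_add]; ring
      have hs3 := Finset.sum_le_sum (fun i (_ : i ∈ Finset.univ) => hwle i)
      have hs4 := (Finset.sum_eq_sum_iff_of_le (fun i (_ : i ∈ Finset.univ) => hwle i)).1
        (by omega)
      funext i
      exact hs4 i (Finset.mem_univ _)
    have h6 := hymin _ h5
    refine absurd h6 (not_le.2 ?_)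
    apply Finset.sum_lt_sum
    · intro i _
      simp only [Pi.add_apply, Pi.sub_apply, Pi.single_apply]
      split_ifs <;> subst_vars <;> omega
    · refine ⟨j, Finset.mem_univ _, ?_⟩
      simp only [Pi.add_apply, Pi.sub_apply, Pi.single_apply, hj, hjk, if_true, if_false]
      omega
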